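/- Let H and T be atomic cancellative monoids and let φ: H → T be an isoatomic weak transfer homomorphism, with extension φ_p to permutable factorizations. Then: (1) for permutable factorizations z, z' of H, z ∣_p z' if and only if φ_p(z) ∣_p φ_p(z'); (2) for a, b ∈ H, a ∣_p b if and only if φ(a) ∣_p φ(b); (3) ω_p(H, a) ≤ ω_p(T, φ(a)) and ω_p'(H, a) ≤ ω_p'(T, φ(a)) for all a ∈ H, with equality in both if T is commutative, in which case also ω_p(H) = ω_p(T) and ω_p'(H) = ω_p'(T); (4) t_p(a, x) = t_p(φ(a), φ_p(x)) for all a ∈ H and permutable factorizations x of H, and t_p(H) = t_p(T). -/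

import Mathlib

def MAtom {H : Type*} [Monoid H] (u : H) : Prop :=
  ¬ IsUnit u ∧ ∀ a b : H, u = a * b → IsUnit a ∨ IsUnit b

def TAssoc {H : Type*} [Monoid H] (a b : H) : Prop :=
  ∃ ε η : Hˣ, b = (ε : H) * a * (η : H)

def Atomic (H : Type*) [Monoid H] : Prop :=
  ∀ a : H, ¬ IsUnit a → ∃ l : List H, l ≠ [] ∧ (∀ u ∈ l, MAtom u) ∧ a = l.prod

def T1Cond {H T : Type*} [Monoid H] [Monoid T] (φ : H →* T) : Prop :=
  (∀ t : T, ∃ (ε η : Tˣ) (a : H), t = (ε : T) * φ a * (η : T)) ∧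
    ∀ a : H, IsUnit (φ a) ↔ IsUnit a

def IsTransferHom {H T : Type*} [Monoid H] [Monoid T] (φ : H →* T) : Prop :=
  T1Cond φ ∧
    ∀ (a : H) (b₁ b₂ : T), φ a = b₁ * b₂ →
      ∃ (a₁ a₂ : H) (ε : Tˣ), a = a₁ * a₂ ∧ φ a₁ = b₁ * ((ε⁻¹ : Tˣ) : T) ∧ φ a₂ = (ε : T) * b₂

def IsWeakTransferHom {H T : Type*} [Monoid H] [Monoid T] (φ : H →* T) : Prop :=
  T1Cond φ ∧
    ∀ (a : H) (n : ℕ), 0 < n → ∀ v : Fin n → T, (∀ i, MAtom (v i)) →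
      φ a = (List.ofFn v).prod →
      ∃ (u : Fin n → H) (σ : Equiv.Perm (Fin n)),
        (∀ i, MAtom (u i)) ∧ a = (List.ofFn u).prod ∧ ∀ i, TAssoc (φ (u i)) (v (σ i))

def IsIsoatomic {H T : Type*} [Monoid H] [Monoid T] (φ : H →* T) : Prop :=
  ∀ u v : H, MAtom u → MAtom v → TAssoc (φ u) (φ v) → TAssoc u v

def lengthsOf {H : Type*} [Monoid H] (a : H) : Set ℕ :=
  {n | (n = 0 ∧ IsUnit a) ∨
    ∃ l : List H, l ≠ [] ∧ (∀ u ∈ l, MAtom u) ∧ a = l.prod ∧ l.length = n}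
structure RF (H : Type*) [Monoid H] where
  u : Hˣ
  l : List H

namespace RF

variable {H : Type*} [Monoid H]

def IsRigid (z : RF H) : Prop := ∀ x ∈ z.l, MAtom x

def prod (z : RF H) : H := (z.u : H) * z.l.prod

def len (z : RF H) : ℕ := z.l.length

def mul (z w : RF H) : RF H :=
  match z.l with
  | [] => ⟨z.u * w.u, w.l⟩
  | a :: as =>
      ⟨z.u, ((a :: as).dropLast ++
        [(a :: as).getLast (List.cons_ne_nil a as) * (w.u : H)]) ++ w.l⟩

end RF

/-- The equivalence relation on rigid factorization data: same length, and the
atoms agree up to an interpolating family of units `δ`, with the unit part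
absorbing `δ 0` and `δ` becoming trivial after the last atom. -/
def RFEq {H : Type*} [Monoid H] (z w : RF H) : Prop :=
  ∃ δ : ℕ → Hˣ,
    z.l.length = w.l.length ∧ δ z.l.length = 1 ∧ w.u = z.u * (δ 0)⁻¹ ∧
    ∀ (i : ℕ) (hi : i < z.l.length) (hi' : i < w.l.length),
      w.l.get ⟨i, hi'⟩ = ((δ i : H)) * z.l.get ⟨i, hi⟩ * (((δ (i + 1))⁻¹ : Hˣ) : H)

/-- A distance on the rigid factorizations of `H` (axioms (D1)-(D5); (D1) is stated
in the strong form saying the distance vanishes on equivalent rigid factorizations,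
which encodes well-definedness on the category of rigid factorizations). -/
structure IsDistance (H : Type*) [Monoid H] (d : RF H → RF H → ℕ) : Prop where
  d_eq : ∀ z w : RF H, z.IsRigid → w.IsRigid → RFEq z w → d z w = 0
  d_symm : ∀ z w : RF H, z.IsRigid → w.IsRigid → z.prod = w.prod → d z w = d w z
  d_tri : ∀ z w v : RF H, z.IsRigid → w.IsRigid → v.IsRigid →
    z.prod = w.prod → w.prod = v.prod → d z v ≤ d z w + d w v
  d_mul_left : ∀ x z w : RF H, x.IsRigid → z.IsRigid → w.IsRigid → z.prod = w.prod →
    d (x.mul z) (x.mul w) = d z w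
  d_mul_right : ∀ y z w : RF H, y.IsRigid → z.IsRigid → w.IsRigid → z.prod = w.prod →
    d (z.mul y) (w.mul y) = d z w
  d_len : ∀ z w : RF H, z.IsRigid → w.IsRigid → z.prod = w.prod →
    (z.len - w.len ≤ d z w ∧ w.len - z.len ≤ d z w) ∧ d z w ≤ max (max z.len w.len) 1

/-- An `N`-chain of rigid factorizations of `a` between `z` and `w`, in distance `d`. -/
def IsNChain {H : Type*} [Monoid H] (d : RF H → RF H → ℕ) (a : H) (N : ℕ∞)
    (z w : RF H) : Prop :=
  ∃ (n : ℕ) (c : ℕ → RF H), c 0 = z ∧ c n = w ∧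
    (∀ i ≤ n, (c i).IsRigid ∧ (c i).prod = a) ∧
    ∀ i < n, (d (c i) (c (i + 1)) : ℕ∞) ≤ N

/-- A monotone `N`-chain: in addition the lengths are non-decreasing or non-increasing. -/
def IsMonNChain {H : Type*} [Monoid H] (d : RF H → RF H → ℕ) (a : H) (N : ℕ∞)
    (z w : RF H) : Prop :=
  ∃ (n : ℕ) (c : ℕ → RF H), c 0 = z ∧ c n = w ∧
    (∀ i ≤ n, (c i).IsRigid ∧ (c i).prod = a) ∧
    (∀ i < n, (d (c i) (c (i + 1)) : ℕ∞) ≤ N) ∧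
    ((∀ i j, i ≤ j → j ≤ n → (c i).len ≤ (c j).len) ∨
      (∀ i j, i ≤ j → j ≤ n → (c j).len ≤ (c i).len))

/-- The catenary degree of `a` in distance `d`. -/
noncomputable def catenaryDeg {H : Type*} [Monoid H] (d : RF H → RF H → ℕ) (a : H) : ℕ∞ :=
  sInf {N : ℕ∞ | ∀ z w : RF H, z.IsRigid → w.IsRigid → z.prod = a → w.prod = a →
    IsNChain d a N z w}

/-- The monotone catenary degree of `a` in distance `d`. -/
noncomputable def catenaryDegMon {H : Type*} [Monoid H] (d : RF H → RF H → ℕ) (a : H) : ℕ∞ :=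
  sInf {N : ℕ∞ | ∀ z w : RF H, z.IsRigid → w.IsRigid → z.prod = a → w.prod = a →
    IsMonNChain d a N z w}

/-- The set of distances of a set of naturals. -/
def DeltaSet (L : Set ℕ) : Set ℕ :=
  {d | 0 < d ∧ ∃ l ∈ L, l + d ∈ L ∧ ∀ m ∈ L, l < m → m < l + d → False}
/-- Two-sided associativity is an equivalence relation. -/
def assocSetoid (H : Type*) [Monoid H] : Setoid H where
  r := TAssoc
  iseqv := by
    constructor
    · intro a; exact ⟨1, 1, by simp⟩
    · rintro a b ⟨ε, η, rfl⟩
      exact ⟨ε⁻¹, η⁻¹, by simp [mul_assoc]⟩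
    · rintro a b c ⟨ε, η, rfl⟩ ⟨ε', η', rfl⟩
      exact ⟨ε' * ε, η * η', by simp [mul_assoc]⟩

/-- Associativity classes of elements of `H`. -/
def AClass (H : Type*) [Monoid H] := Quotient (assocSetoid H)

def mkCls {H : Type*} [Monoid H] (a : H) : AClass H := Quotient.mk (assocSetoid H) a

/-- The distance between two multisets: `max {card s - card (s ∩ t), card t - card (s ∩ t)}`. -/
noncomputable def mdist {α : Type*} (s t : Multiset α) : ℕ :=
  letI := Classical.decEq α
  max (Multiset.card s - Multiset.card (s ∩ t)) (Multiset.card t - Multiset.card (s ∩ t))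

/-- The multiset of associativity classes of the entries of a list. -/
def clsList {H : Type*} [Monoid H] (l : List H) : Multiset (AClass H) :=
  ((l.map mkCls : List (AClass H)) : Multiset (AClass H))

/-- The permutable distance between two rigid factorizations. -/
noncomputable def dpRF {H : Type*} [Monoid H] (z w : RF H) : ℕ :=
  mdist (clsList z.l) (clsList w.l)

/-- The permutable catenary degree of an element. -/
noncomputable def cpDeg {H : Type*} [Monoid H] (a : H) : ℕ∞ :=
  sInf {N : ℕ∞ | ∀ z w : RF H, z.IsRigid → w.IsRigid → z.prod = a → w.prod = a →
    ∃ (n : ℕ) (c : ℕ → RF H), c 0 = z ∧ c n = w ∧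
      (∀ i ≤ n, (c i).IsRigid ∧ (c i).prod = a) ∧
      ∀ i < n, (dpRF (c i) (c (i + 1)) : ℕ∞) ≤ N}

/-- The permutable catenary degree of a monoid. -/
noncomputable def cpMon (H : Type*) [Monoid H] : ℕ∞ := ⨆ a : H, cpDeg a

/-- The map induced on rigid factorization data by a monoid homomorphism. -/
def mapRF {H T : Type*} [Monoid H] [Monoid T] (φ : H →* T) (z : RF H) : RF T :=
  ⟨Units.map φ z.u, z.l.map φ⟩
/-- Divisibility up to permutation: `a ∣_p b`. -/
def dvdP {H : Type*} [Monoid H] (a b : H) : Prop :=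
  ∃ (k l : ℕ) (u : Fin k → H) (v : Fin l → H),
    (∀ i, MAtom (u i)) ∧ (∀ j, MAtom (v j)) ∧
    TAssoc a (List.ofFn u).prod ∧ TAssoc b (List.ofFn v).prod ∧
    ∃ σ : Fin k ↪ Fin l, ∀ i, TAssoc (u i) (v (σ i))

/-- An almost prime-like element (with respect to `∣_p`). -/
def APLike {H : Type*} [Monoid H] (q : H) : Prop :=
  ¬ IsUnit q ∧ ∀ a b : H, dvdP q (a * b) → dvdP q a ∨ dvdP q b

/-- The number of entries of `l` associated to `q`. -/
noncomputable def countAssoc {H : Type*} [Monoid H] (l : List H) (q : H) : ℕ :=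
  Nat.card {i : Fin l.length // TAssoc (l.get i) q}

/-- The `q`-adic valuation of `a`: the set of numbers of occurrences (up to associativity)
of `q` in factorizations of `a` into atoms. -/
def Vq {H : Type*} [Monoid H] (q a : H) : Set ℕ :=
  {n | ∃ l : List H, (∀ u ∈ l, MAtom u) ∧ TAssoc a l.prod ∧ countAssoc l q = n}

/-- A prime-like element: almost prime-like, with singleton `q`-adic valuations. -/
def PrimeLike {H : Type*} [Monoid H] (q : H) : Prop :=
  APLike q ∧ ∀ a : H, ∃ n : ℕ, Vq q a = {n}

/-- `H` is permutably factorial. -/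
def PermutablyFactorial (H : Type*) [Monoid H] : Prop :=
  Atomic H ∧
    ∀ (k l : ℕ) (u : Fin k → H) (v : Fin l → H),
      (∀ i, MAtom (u i)) → (∀ j, MAtom (v j)) →
      (List.ofFn u).prod = (List.ofFn v).prod →
      ∃ σ : Fin k ≃ Fin l, ∀ i, TAssoc (u i) (v (σ i))
/-- The `ω_p`-invariant of the pair `(a, b)` (factorizations of `a` into atoms). -/
noncomputable def omegaEl {H : Type*} [Monoid H] (a b : H) : ℕ∞ :=
  sInf {N : ℕ∞ | ∀ (n : ℕ) (u : Fin n → H), (∀ i, MAtom (u i)) →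
    a = (List.ofFn u).prod → dvdP b a →
    ∃ k : ℕ, (k : ℕ∞) ≤ N ∧ ∃ σ : Fin k ↪ Fin n,
      dvdP b (List.ofFn fun i => u (σ i)).prod}

/-- The `ω_p'`-invariant of the pair `(a, b)` (products of arbitrary elements). -/
noncomputable def omegaEl' {H : Type*} [Monoid H] (a b : H) : ℕ∞ :=
  sInf {N : ℕ∞ | ∀ (n : ℕ) (u : Fin n → H),
    a = (List.ofFn u).prod → dvdP b a →
    ∃ k : ℕ, (k : ℕ∞) ≤ N ∧ ∃ σ : Fin k ↪ Fin n,
      dvdP b (List.ofFn fun i => u (σ i)).prod}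

noncomputable def omegaH {H : Type*} [Monoid H] (b : H) : ℕ∞ := ⨆ a : H, omegaEl a b

noncomputable def omegaH' {H : Type*} [Monoid H] (b : H) : ℕ∞ := ⨆ a : H, omegaEl' a b

noncomputable def omegaMon (H : Type*) [Monoid H] : ℕ∞ :=
  ⨆ (u : H) (_ : MAtom u), omegaH u

noncomputable def omegaMon' (H : Type*) [Monoid H] : ℕ∞ :=
  ⨆ (u : H) (_ : MAtom u), omegaH' u
/-- Permutable factorizations of `a`, represented as multisets of associativity
classes of atoms realizing `a` (up to a unit). -/
def ZpSet {H : Type*} [Monoid H] (a : H) : Set (Multiset (AClass H)) :=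
  {s | ∃ (ε : Hˣ) (l : List H), (∀ u ∈ l, MAtom u) ∧ a = (ε : H) * l.prod ∧ s = clsList l}

/-- The permutable tame degree `t_p(a, x)`. -/
noncomputable def tpEl {H : Type*} [Monoid H] (a : H) (x : Multiset (AClass H)) : ℕ∞ :=
  sInf {N : ℕ∞ | (∃ z₀ ∈ ZpSet a, x ≤ z₀) →
    ∀ z ∈ ZpSet a, ∃ z' ∈ ZpSet a, x ≤ z' ∧ (mdist z z' : ℕ∞) ≤ N}

/-- The permutable tame degree `t_p(H)`. -/
noncomputable def tpMon (H : Type*) [Monoid H] : ℕ∞ :=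
  ⨆ (u : H) (_ : MAtom u) (a : H), tpEl a {mkCls u}

/-- The permutable tame degree `t_p(H, Z_p(H))`. -/
noncomputable def tpZpMon (H : Type*) [Monoid H] : ℕ∞ :=
  ⨆ (a : H) (x : Multiset (AClass H)) (_ : ∃ b : H, x ∈ ZpSet b), tpEl a x

/-- The map induced on associativity classes by a monoid homomorphism. -/
def mapCls {H T : Type*} [Monoid H] [Monoid T] (φ : H →* T) : AClass H → AClass T :=
  Quotient.lift (fun a => mkCls (φ a)) (by
    rintro a b ⟨ε, η, rfl⟩
    exact Quotient.sound ⟨Units.map φ ε, Units.map φ η, by simp⟩)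

/-!
Every invariant in question is computed from the sets `ZpSet a` of permutable factorizations, that
is, from multisets of associativity classes of atoms. A weak transfer homomorphism `φ` maps atoms
to atoms and `ZpSet a` onto `ZpSet (φ a)`; being isoatomic says precisely that `mapCls φ` is
injective on classes of atoms. Hence `Multiset.map (mapCls φ)` identifies `ZpSet a` with
`ZpSet (φ a)` compatibly with inclusion and distance, which settles `∣_p` and the tame degree.
For the `ω`-invariants one also lifts products of `T` to `H` factor by factor; the lift has the
right image, up to associativity, as soon as associativity is a congruence on `T`.

That `φ` maps atoms to atoms rests on an atom `u` never being a left factor of a unit: if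
`u * y = 1`, then `u = u * (y * u)` forces the idempotent `y * u` to be a unit, hence `1`.
-/

/-! ### Multisets and lists -/

theorem multiset_map_inter_of_injective {α β : Type*} [DecidableEq α] [DecidableEq β] {f : α → β}
    (hf : Function.Injective f) (s t : Multiset α) : (s ∩ t).map f = s.map f ∩ t.map f := by
  ext b
  by_cases hb : ∃ a, f a = b
  · obtain ⟨a, rfl⟩ := hb
    simp only [Multiset.count_map_eq_count' f _ hf, Multiset.count_inter]
  · have hcount (r : Multiset α) : (r.map f).count b = 0 :=
      Multiset.count_eq_zero.2 fun h => hb ((Multiset.mem_map.1 h).imp fun _ => And.right)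
    simp only [Multiset.count_inter, hcount, min_self]

theorem mdist_map_of_injective {α β : Type*} {f : α → β} (hf : Function.Injective f)
    (s t : Multiset α) : mdist (s.map f) (t.map f) = mdist s t := by
  classical
  simp only [mdist, ← multiset_map_inter_of_injective hf, Multiset.card_map]

section InjOn

variable {α β : Type*} {A : Set α} {f : α → β} {s t : Multiset α}

theorem multiset_map_le_map_iff_of_injOn (hf : A.InjOn f) (hs : ∀ a ∈ s, a ∈ A)
    (ht : ∀ a ∈ t, a ∈ A) : s.map f ≤ t.map f ↔ s ≤ t := by
  lift s to Multiset A using hs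
  lift t to Multiset A using ht
  simp only [Multiset.map_map]
  rw [Multiset.map_le_map_iff Subtype.val_injective]
  exact Multiset.map_le_map_iff hf.injective

theorem mdist_map_of_injOn (hf : A.InjOn f) (hs : ∀ a ∈ s, a ∈ A) (ht : ∀ a ∈ t, a ∈ A) :
    mdist (s.map f) (t.map f) = mdist s t := by
  lift s to Multiset A using hs
  lift t to Multiset A using ht
  simp only [Multiset.map_map]
  rw [mdist_map_of_injective Subtype.val_injective]
  exact mdist_map_of_injective hf.injective s t

end InjOn

theorem list_ofFn_subperm_ofFn_iff {α : Type*} {k l : ℕ} {f : Fin k → α} {g : Fin l → α} :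
    (List.ofFn f).Subperm (List.ofFn g) ↔ ∃ σ : Fin k ↪ Fin l, ∀ i, f i = g (σ i) := by
  classical
  constructor
  · intro h
    let index : Fin (List.ofFn f).length ↪ Fin (List.ofFn g).length :=
      ⟨h.idxInj, h.idxInj_injective⟩
    refine ⟨(finCongr List.length_ofFn.symm).toEmbedding.trans
      (index.trans (finCongr List.length_ofFn).toEmbedding), fun i => ?_⟩
    have hi := h.getElem_idxInj_eq_getElem (i := i.cast List.length_ofFn.symm)
    simp only [List.getElem_ofFn] at hi
    exact hi.symm
  · rintro ⟨σ, hσ⟩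
    obtain rfl : f = g ∘ σ := funext hσ
    rw [← Multiset.coe_le, ← Fin.univ_val_map, ← Fin.univ_val_map, ← Multiset.map_map,
      ← Finset.map_val]
    exact Multiset.map_le_map (Finset.val_le_iff.2 (Finset.subset_univ _))

theorem sInf_le_iff_mem_of_isUpperSet {α : Type*} [CompleteLinearOrder α] [WellFoundedLT α]
    {S : Set α} (hS : IsUpperSet S) (hne : S.Nonempty) {N : α} : sInf S ≤ N ↔ N ∈ S :=
  ⟨fun h => hS h (csInf_mem hne), fun h => sInf_le h⟩

/-! ### Associativity and atoms -/

section Monoid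

variable {M : Type*} [Monoid M]

namespace TAssoc

theorem refl (a : M) : TAssoc a a := (assocSetoid M).refl a

theorem symm {a b : M} (h : TAssoc a b) : TAssoc b a := (assocSetoid M).symm h

theorem trans {a b c : M} (hab : TAssoc a b) (hbc : TAssoc b c) : TAssoc a c :=
  (assocSetoid M).trans hab hbc

theorem units_mul (ε : Mˣ) (a : M) : TAssoc a (ε * a) := ⟨ε, 1, by simp⟩

theorem isUnit_iff {a b : M} (h : TAssoc a b) : IsUnit a ↔ IsUnit b := by
  obtain ⟨ε, η, rfl⟩ := h
  rw [Units.isUnit_mul_units, Units.isUnit_units_mul]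

end TAssoc

theorem mkCls_eq_mkCls_iff {a b : M} : mkCls a = mkCls b ↔ TAssoc a b := Quotient.eq

theorem mAtom_iff_irreducible {u : M} : MAtom u ↔ Irreducible u := irreducible_iff.symm

theorem TAssoc.mAtom_iff {u v : M} (h : TAssoc u v) : MAtom u ↔ MAtom v := by
  obtain ⟨ε, η, rfl⟩ := h
  simp only [mAtom_iff_irreducible, irreducible_mul_units, irreducible_units_mul]

theorem MAtom.not_isUnit_mul {u : M} (hu : MAtom u) (x : M) : ¬IsUnit (u * x) := by
  intro hux
  obtain ⟨y, huy⟩ : ∃ y, u * y = 1 := by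
    obtain ⟨y, hy⟩ := hux.exists_right_inv
    exact ⟨x * y, by rw [← mul_assoc, hy]⟩
  have hfactor : u = u * (y * u) := by rw [← mul_assoc, huy, one_mul]
  have hidem : IsIdempotentElem (y * u) := by
    rw [IsIdempotentElem, mul_assoc, ← hfactor]
  have hyu : y * u = 1 :=
    (IsIdempotentElem.iff_eq_one_of_isUnit ((hu.2 _ _ hfactor).resolve_left hu.1)).1 hidem
  exact hu.1 (isUnit_iff_exists.2 ⟨y, huy, hyu⟩)

theorem MAtom.exists_eq_singleton_of_prod {l : List M} (hl : ∀ u ∈ l, MAtom u)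
    (hprod : MAtom l.prod) : ∃ u, l = [u] := by
  match l with
  | [] => exact absurd isUnit_one hprod.1
  | [u] => exact ⟨u, rfl⟩
  | u :: v :: l =>
    simp only [List.forall_mem_cons] at hl
    rw [List.prod_cons, List.prod_cons] at hprod
    rcases hprod.2 _ _ rfl with h | h
    · exact absurd h hl.1.1
    · exact absurd h (hl.2.1.not_isUnit_mul l.prod)

theorem clsList_cons (u : M) (l : List M) : clsList (u :: l) = mkCls u ::ₘ clsList l := rfl

theorem clsList_ofFn {n : ℕ} (u : Fin n → M) :
    clsList (List.ofFn u) = (List.ofFn (mkCls ∘ u) : Multiset (AClass M)) := by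
  rw [clsList, List.map_ofFn]

theorem clsList_map {H : Type*} [Monoid H] (φ : H →* M) (l : List H) :
    clsList (l.map φ) = (clsList l).map (mapCls φ) := by
  simp only [clsList, Multiset.map_coe, List.map_map]
  rfl

theorem clsList_eq_of_forall₂ {l m : List M} (h : List.Forall₂ TAssoc l m) :
    clsList l = clsList m := by
  induction h with
  | nil => rfl
  | cons huv _ ih => rw [clsList_cons, clsList_cons, mkCls_eq_mkCls_iff.2 huv, ih]

theorem forall_mAtom_of_forall₂ {l m : List M} (h : List.Forall₂ TAssoc l m)
    (hl : ∀ u ∈ l, MAtom u) : ∀ v ∈ m, MAtom v := by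
  induction h with
  | nil => exact hl
  | cons huv _ ih =>
    rw [List.forall_mem_cons] at hl ⊢
    exact ⟨huv.mAtom_iff.1 hl.1, ih hl.2⟩

theorem exists_forall₂_tAssoc_prod_eq {l : List M} (hne : l ≠ []) {a : M}
    (ha : TAssoc l.prod a) : ∃ m, List.Forall₂ TAssoc l m ∧ m.prod = a := by
  obtain ⟨ε, η, rfl⟩ := ha
  induction l generalizing ε with
  | nil => exact absurd rfl hne
  | cons u l ih =>
    rcases eq_or_ne l [] with rfl | hl
    · exact ⟨[ε * u * η], .cons ⟨ε, η, rfl⟩ .nil, by simp⟩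
    · obtain ⟨m, hlm, hm⟩ := ih hl 1
      exact ⟨ε * u :: m, .cons (.units_mul ε u) hlm, by simp [hm, mul_assoc]⟩

/-! ### Permutable factorizations -/

theorem mem_zpSet_iff {a : M} {s : Multiset (AClass M)} :
    s ∈ ZpSet a ↔ ∃ l : List M, (∀ u ∈ l, MAtom u) ∧ TAssoc l.prod a ∧ clsList l = s := by
  constructor
  · rintro ⟨ε, l, hl, rfl, rfl⟩
    exact ⟨l, hl, .units_mul ε _, rfl⟩
  · rintro ⟨l, hl, hla, rfl⟩
    rcases eq_or_ne l [] with rfl | hne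
    · obtain ⟨ε, rfl⟩ := hla.isUnit_iff.1 isUnit_one
      exact ⟨ε, [], hl, by simp, rfl⟩
    · obtain ⟨m, hlm, rfl⟩ := exists_forall₂_tAssoc_prod_eq hne hla
      exact ⟨1, m, forall_mAtom_of_forall₂ hlm hl, by simp, clsList_eq_of_forall₂ hlm⟩

theorem clsList_mem_zpSet_prod {l : List M} (hl : ∀ u ∈ l, MAtom u) : clsList l ∈ ZpSet l.prod :=
  mem_zpSet_iff.2 ⟨l, hl, .refl _, rfl⟩

theorem zpSet_congr {a b : M} (h : TAssoc a b) : ZpSet a = ZpSet b := by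
  ext s
  simp only [mem_zpSet_iff]
  exact exists_congr fun l => and_congr_right fun _ => and_congr_left fun _ =>
    ⟨fun hl => hl.trans h, fun hl => hl.trans h.symm⟩

theorem zpSet_eq_singleton_of_mAtom {u : M} (hu : MAtom u) : ZpSet u = {{mkCls u}} := by
  ext s
  rw [mem_zpSet_iff, Set.mem_singleton_iff]
  constructor
  · rintro ⟨l, hl, hlu, rfl⟩
    obtain ⟨v, rfl⟩ := MAtom.exists_eq_singleton_of_prod hl (hlu.mAtom_iff.2 hu)
    rw [List.prod_singleton] at hlu
    exact congrArg ({·}) (mkCls_eq_mkCls_iff.2 hlu)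
  · rintro rfl
    exact ⟨[u], by simpa using hu, by simpa using TAssoc.refl u, rfl⟩

theorem Atomic.zpSet_nonempty (hM : Atomic M) (a : M) : (ZpSet a).Nonempty := by
  by_cases ha : IsUnit a
  · obtain ⟨ε, rfl⟩ := ha
    exact ⟨0, ε, [], by simp, by simp, rfl⟩
  · obtain ⟨l, -, hl, rfl⟩ := hM a ha
    exact ⟨_, clsList_mem_zpSet_prod hl⟩

/-- The associativity classes of atoms, i.e. the entries of permutable factorizations. -/
def atomClasses (M : Type*) [Monoid M] : Set (AClass M) := mkCls '' {u | MAtom u}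

theorem mkCls_mem_atomClasses_iff {u : M} : mkCls u ∈ atomClasses M ↔ MAtom u := by
  refine ⟨?_, fun hu => ⟨u, hu, rfl⟩⟩
  rintro ⟨v, hv, hvu⟩
  exact (mkCls_eq_mkCls_iff.1 hvu).mAtom_iff.1 hv

theorem mem_atomClasses_of_mem_zpSet {a : M} {s : Multiset (AClass M)} (hs : s ∈ ZpSet a) :
    ∀ c ∈ s, c ∈ atomClasses M := by
  obtain ⟨l, hl, -, rfl⟩ := mem_zpSet_iff.1 hs
  intro c hc
  obtain ⟨u, hu, rfl⟩ := List.mem_map.1 hc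
  exact ⟨u, hl u hu, rfl⟩

theorem clsList_ofFn_le_clsList_ofFn_iff {k l : ℕ} {u : Fin k → M} {v : Fin l → M} :
    clsList (List.ofFn u) ≤ clsList (List.ofFn v) ↔
      ∃ σ : Fin k ↪ Fin l, ∀ i, TAssoc (u i) (v (σ i)) := by
  simp only [clsList_ofFn, Multiset.coe_le, list_ofFn_subperm_ofFn_iff, Function.comp_apply,
    mkCls_eq_mkCls_iff]

theorem dvdP_iff_exists_le {a b : M} : dvdP a b ↔ ∃ s ∈ ZpSet a, ∃ t ∈ ZpSet b, s ≤ t := by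
  constructor
  · rintro ⟨k, l, u, v, hu, hv, ha, hb, hσ⟩
    rw [zpSet_congr ha, zpSet_congr hb]
    exact ⟨_, clsList_mem_zpSet_prod (List.forall_mem_ofFn_iff.2 hu),
      _, clsList_mem_zpSet_prod (List.forall_mem_ofFn_iff.2 hv),
      clsList_ofFn_le_clsList_ofFn_iff.2 hσ⟩
  · rintro ⟨s, hs, t, ht, hst⟩
    obtain ⟨l, hl, hla, rfl⟩ := mem_zpSet_iff.1 hs
    obtain ⟨m, hm, hmb, rfl⟩ := mem_zpSet_iff.1 ht
    refine ⟨l.length, m.length, l.get, m.get, fun i => hl _ (l.get_mem i),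
      fun i => hm _ (m.get_mem i), ?_, ?_, clsList_ofFn_le_clsList_ofFn_iff.1 ?_⟩
    · rw [List.ofFn_get]
      exact hla.symm
    · rw [List.ofFn_get]
      exact hmb.symm
    · rwa [List.ofFn_get, List.ofFn_get]

theorem dvdP_congr {a b a' b' : M} (ha : TAssoc a a') (hb : TAssoc b b') :
    dvdP a b ↔ dvdP a' b' := by
  rw [dvdP_iff_exists_le, dvdP_iff_exists_le, zpSet_congr ha, zpSet_congr hb]

theorem tpEl_congr {a b : M} (h : TAssoc a b) : tpEl a = tpEl b := by
  funext x
  rw [tpEl, zpSet_congr h, tpEl]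

/-! ### The `ω`-invariants -/

/-- `N` bounds the number of factors that suffice for divisibility by `b` up to permutation, among
all products of elements of `A` which `b` divides up to permutation. -/
def HasOmegaBound (A : Set M) (b : M) (N : ℕ∞) : Prop :=
  ∀ (n : ℕ) (u : Fin n → M), (∀ i, u i ∈ A) → dvdP b (List.ofFn u).prod →
    ∃ k : ℕ, (k : ℕ∞) ≤ N ∧ ∃ σ : Fin k ↪ Fin n, dvdP b (List.ofFn (u ∘ σ)).prod

/-- The `ω`-invariant of `b` for products of elements of `A`; the common form of `omegaH`, where
`A` consists of the atoms, and `omegaH'`, where `A` is everything. -/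
noncomputable def omegaOn (A : Set M) (b : M) : ℕ∞ :=
  ⨆ a : M, sInf {N : ℕ∞ | ∀ (n : ℕ) (u : Fin n → M), (∀ i, u i ∈ A) →
    a = (List.ofFn u).prod → dvdP b a →
    ∃ k : ℕ, (k : ℕ∞) ≤ N ∧ ∃ σ : Fin k ↪ Fin n, dvdP b (List.ofFn (u ∘ σ)).prod}

theorem omegaH_eq_omegaOn (b : M) : omegaH b = omegaOn {u | MAtom u} b := rfl

theorem omegaH'_eq_omegaOn (b : M) : omegaH' b = omegaOn Set.univ b := by
  simp only [omegaH', omegaEl', omegaOn, Set.mem_univ, implies_true, forall_const,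
    Function.comp_def]

theorem omegaOn_le_iff {A : Set M} {b : M} {N : ℕ∞} : omegaOn A b ≤ N ↔ HasOmegaBound A b N := by
  rw [omegaOn, iSup_le_iff]
  have hmem (a : M) := sInf_le_iff_mem_of_isUpperSet (N := N)
    (S := {N : ℕ∞ | ∀ (n : ℕ) (u : Fin n → M), (∀ i, u i ∈ A) →
      a = (List.ofFn u).prod → dvdP b a →
      ∃ k : ℕ, (k : ℕ∞) ≤ N ∧ ∃ σ : Fin k ↪ Fin n, dvdP b (List.ofFn (u ∘ σ)).prod})
    (fun N N' hN h n u hu ha hb => (h n u hu ha hb).imp fun k hk => ⟨hk.1.trans hN, hk.2⟩)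
    ⟨⊤, fun n u _ ha hb => ⟨n, le_top, .refl _, ha ▸ hb⟩⟩
  simp only [hmem, Set.mem_ofPred_eq]
  exact ⟨fun h n u hu hb => h _ n u hu rfl hb, fun h a n u hu ha hb => h n u hu (ha ▸ hb)⟩

theorem hasOmegaBound_omegaOn (A : Set M) (b : M) : HasOmegaBound A b (omegaOn A b) :=
  omegaOn_le_iff.1 le_rfl

theorem omegaOn_congr (A : Set M) {b b' : M} (h : TAssoc b b') : omegaOn A b = omegaOn A b' := by
  simp only [omegaOn, fun a => dvdP_congr h (TAssoc.refl a)]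

/-- Associativity is a congruence on `M`. This holds if `M` is commutative, and also if `1` is the
only unit of `M`. -/
def AssocCongruence (M : Type*) [Monoid M] : Prop :=
  ∀ ⦃a b c d : M⦄, TAssoc a b → TAssoc c d → TAssoc (a * c) (b * d)

theorem assocCongruence_of_comm (hcomm : ∀ x y : M, x * y = y * x) : AssocCongruence M := by
  rintro a _ c _ ⟨ε, η, rfl⟩ ⟨ε', η', rfl⟩
  let _ : CommMonoid M := { ‹Monoid M› with mul_comm := hcomm }
  refine ⟨ε * ε', η * η', ?_⟩
  push_cast
  ac_rfl

theorem AssocCongruence.prod_ofFn (hM : AssocCongruence M) {n : ℕ} {u v : Fin n → M}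
    (huv : ∀ i, TAssoc (u i) (v i)) : TAssoc (List.ofFn u).prod (List.ofFn v).prod := by
  let c : Con M := { assocSetoid M with mul' := @hM }
  rw [List.ofFn_eq_map, List.ofFn_eq_map]
  exact c.list_prod fun i _ => huv i

end Monoid

section Hom

variable {H T : Type*} [Monoid H] [Monoid T] {φ : H →* T}

theorem map_prod_ofFn (φ : H →* T) {n : ℕ} (u : Fin n → H) :
    φ (List.ofFn u).prod = (List.ofFn (φ ∘ u)).prod := by
  rw [map_list_prod, List.map_ofFn]

/-! ### Maps surjective up to associativity -/

/-- `φ` maps `A` into `B` and, up to associativity, onto `B`. -/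
structure SurjUpToAssoc (φ : H →* T) (A : Set H) (B : Set T) : Prop where
  mapsTo : Set.MapsTo φ A B
  exists_lift : ∀ v ∈ B, ∃ u ∈ A, TAssoc (φ u) v

theorem SurjUpToAssoc.biSup_eq {A : Set H} {B : Set T} (hφ : SurjUpToAssoc φ A B) {α : Type*}
    [CompleteLattice α] {f : H → α} {g : T → α} (hfg : ∀ u ∈ A, f u = g (φ u))
    (hg : ∀ v w, TAssoc v w → g v = g w) : ⨆ u ∈ A, f u = ⨆ v ∈ B, g v := by
  apply le_antisymm
  · refine iSup₂_le fun u hu => ?_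
    rw [hfg u hu]
    exact le_iSup₂ (f := fun v (_ : v ∈ B) => g v) (φ u) (hφ.mapsTo hu)
  · refine iSup₂_le fun v hv => ?_
    obtain ⟨u, hu, huv⟩ := hφ.exists_lift v hv
    rw [← hg _ _ huv, ← hfg u hu]
    exact le_iSup₂ (f := fun u (_ : u ∈ A) => f u) u hu

section Omega

variable {A : Set H} {B : Set T} (hdvd : ∀ a b : H, dvdP a b ↔ dvdP (φ a) (φ b))
include hdvd

theorem omegaOn_le_omegaOn_map (hAB : Set.MapsTo φ A B) (b : H) :
    omegaOn A b ≤ omegaOn B (φ b) := by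
  rw [omegaOn_le_iff]
  intro n u hu hb
  rw [hdvd, map_prod_ofFn] at hb
  obtain ⟨k, hk, σ, hσ⟩ := hasOmegaBound_omegaOn B (φ b) n (φ ∘ u) (fun i => hAB (hu i)) hb
  refine ⟨k, hk, σ, ?_⟩
  rwa [hdvd, map_prod_ofFn]

theorem SurjUpToAssoc.omegaOn_map_eq (hφ : SurjUpToAssoc φ A B) (hT : AssocCongruence T) (b : H) :
    omegaOn A b = omegaOn B (φ b) := by
  refine le_antisymm (omegaOn_le_omegaOn_map hdvd hφ.mapsTo b) (omegaOn_le_iff.2 ?_)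
  intro n v hv hb
  choose u hu huv using fun i => hφ.exists_lift (v i) (hv i)
  have hdvd_lift {k : ℕ} (ι : Fin k → Fin n) :
      dvdP b (List.ofFn (u ∘ ι)).prod ↔ dvdP (φ b) (List.ofFn (v ∘ ι)).prod := by
    rw [hdvd, map_prod_ofFn]
    exact dvdP_congr (.refl _) (hT.prod_ofFn fun i => huv (ι i))
  obtain ⟨k, hk, σ, hσ⟩ := hasOmegaBound_omegaOn A b n u hu ((hdvd_lift id).2 hb)
  exact ⟨k, hk, σ, (hdvd_lift σ).1 hσ⟩

end Omega

/-! ### Weak transfer homomorphisms -/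

namespace IsWeakTransferHom

theorem exists_mem_zpSet_map_eq (hw : IsWeakTransferHom φ) {a : H} {t : Multiset (AClass T)}
    (ht : t ∈ ZpSet (φ a)) : ∃ s ∈ ZpSet a, s.map (mapCls φ) = t := by
  obtain ⟨l, hl, hla, rfl⟩ := mem_zpSet_iff.1 ht
  rcases eq_or_ne l [] with rfl | hne
  · obtain ⟨ε, rfl⟩ := (hw.1.2 a).1 (hla.isUnit_iff.1 isUnit_one)
    exact ⟨0, ⟨ε, [], by simp, by simp, rfl⟩, rfl⟩
  obtain ⟨m, hlm, hma⟩ := exists_forall₂_tAssoc_prod_eq hne hla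
  have hm := forall_mAtom_of_forall₂ hlm hl
  have hm_pos : 0 < m.length := hlm.length_eq ▸ List.length_pos_iff.2 hne
  obtain ⟨u, σ, hu, rfl, huσ⟩ := hw.2 a m.length hm_pos m.get (fun i => hm _ (m.get_mem i))
    (by rw [List.ofFn_get, hma])
  refine ⟨_, clsList_mem_zpSet_prod (List.forall_mem_ofFn_iff.2 hu), ?_⟩
  have hcls : mkCls ∘ φ ∘ u = (mkCls ∘ m.get) ∘ σ := funext fun i => mkCls_eq_mkCls_iff.2 (huσ i)
  calc (clsList (List.ofFn u)).map (mapCls φ)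
      = List.ofFn ((mkCls ∘ m.get) ∘ σ) := by rw [← clsList_map, List.map_ofFn, clsList_ofFn, hcls]
    _ = List.ofFn (mkCls ∘ m.get) := Multiset.coe_eq_coe.2 (σ.ofFn_comp_perm _)
    _ = clsList l := by rw [← clsList_ofFn, List.ofFn_get, clsList_eq_of_forall₂ hlm]

theorem surjUpToAssoc_univ (hw : IsWeakTransferHom φ) :
    SurjUpToAssoc φ Set.univ Set.univ where
  mapsTo := Set.mapsTo_univ _ _
  exists_lift v _ := by
    obtain ⟨ε, η, a, hv⟩ := hw.1.1 v
    exact ⟨a, trivial, ε, η, hv⟩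

theorem mAtom_map (hT : Atomic T) (hw : IsWeakTransferHom φ) {u : H} (hu : MAtom u) :
    MAtom (φ u) := by
  obtain ⟨t, ht⟩ := hT.zpSet_nonempty (φ u)
  obtain ⟨s, hs, rfl⟩ := hw.exists_mem_zpSet_map_eq ht
  rw [zpSet_eq_singleton_of_mAtom hu, Set.mem_singleton_iff] at hs
  subst hs
  exact mkCls_mem_atomClasses_iff.1 <|
    mem_atomClasses_of_mem_zpSet ht _ (Multiset.mem_singleton_self _)

theorem surjUpToAssoc_atoms (hT : Atomic T) (hw : IsWeakTransferHom φ) :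
    SurjUpToAssoc φ {u | MAtom u} {v | MAtom v} where
  mapsTo _ hu := hw.mAtom_map hT hu
  exists_lift v hv := by
    obtain ⟨a, -, hav⟩ := hw.surjUpToAssoc_univ.exists_lift v trivial
    have hmem : {mkCls v} ∈ ZpSet (φ a) := by
      rw [zpSet_congr hav, zpSet_eq_singleton_of_mAtom hv, Set.mem_singleton_iff]
    obtain ⟨s, hs, hsv⟩ := hw.exists_mem_zpSet_map_eq hmem
    obtain ⟨c, rfl, hcv⟩ := Multiset.map_eq_singleton.1 hsv
    obtain ⟨u, hu, rfl⟩ := mem_atomClasses_of_mem_zpSet hs c (Multiset.mem_singleton_self c)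
    exact ⟨u, hu, mkCls_eq_mkCls_iff.1 hcv⟩

theorem zpSet_map (hT : Atomic T) (hw : IsWeakTransferHom φ) (a : H) :
    ZpSet (φ a) = Multiset.map (mapCls φ) '' ZpSet a := by
  refine Set.Subset.antisymm (fun t ht => hw.exists_mem_zpSet_map_eq ht) ?_
  rintro _ ⟨_, ⟨ε, l, hl, rfl, rfl⟩, rfl⟩
  refine ⟨Units.map φ ε, l.map φ, ?_, by simp [map_list_prod], (clsList_map φ l).symm⟩
  exact List.forall_mem_map.2 fun u hu => hw.mAtom_map hT (hl u hu)

end IsWeakTransferHom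

/-! ### Isoatomic weak transfer homomorphisms -/

theorem IsIsoatomic.injOn_mapCls (hi : IsIsoatomic φ) :
    Set.InjOn (mapCls φ) (atomClasses H) := by
  rintro _ ⟨u, hu, rfl⟩ _ ⟨v, hv, rfl⟩ huv
  exact mkCls_eq_mkCls_iff.2 (hi u v hu hv (mkCls_eq_mkCls_iff.1 huv))

theorem IsIsoatomic.map_mapCls_le_iff (hi : IsIsoatomic φ) {a b : H}
    {s s' : Multiset (AClass H)} (hs : s ∈ ZpSet a) (hs' : s' ∈ ZpSet b) :
    s.map (mapCls φ) ≤ s'.map (mapCls φ) ↔ s ≤ s' :=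
  multiset_map_le_map_iff_of_injOn hi.injOn_mapCls (mem_atomClasses_of_mem_zpSet hs)
    (mem_atomClasses_of_mem_zpSet hs')

theorem IsIsoatomic.mdist_map_mapCls (hi : IsIsoatomic φ) {a b : H}
    {s s' : Multiset (AClass H)} (hs : s ∈ ZpSet a) (hs' : s' ∈ ZpSet b) :
    mdist (s.map (mapCls φ)) (s'.map (mapCls φ)) = mdist s s' :=
  mdist_map_of_injOn hi.injOn_mapCls (mem_atomClasses_of_mem_zpSet hs)
    (mem_atomClasses_of_mem_zpSet hs')

section Isoatomic

variable (hT : Atomic T) (hw : IsWeakTransferHom φ) (hi : IsIsoatomic φ)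
include hT hw hi

theorem dvdP_map_iff (a b : H) : dvdP a b ↔ dvdP (φ a) (φ b) := by
  simp only [dvdP_iff_exists_le, hw.zpSet_map hT, Set.exists_mem_image]
  exact exists_congr fun s => and_congr_right fun hs => exists_congr fun t =>
    and_congr_right fun ht => (hi.map_mapCls_le_iff hs ht).symm

theorem tpEl_map (a : H) {b : H} {x : Multiset (AClass H)} (hx : x ∈ ZpSet b) :
    tpEl a x = tpEl (φ a) (x.map (mapCls φ)) := by
  simp only [tpEl, hw.zpSet_map hT, Set.exists_mem_image, Set.forall_mem_image]
  congr! 4 with N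
  · exact exists_congr fun z => and_congr_right fun hz => (hi.map_mapCls_le_iff hx hz).symm
  · refine forall₂_congr fun z hz => exists_congr fun z' => and_congr_right fun hz' => ?_
    rw [hi.map_mapCls_le_iff hx hz', hi.mdist_map_mapCls hz hz']

theorem tpMon_eq : tpMon H = tpMon T := by
  refine (hw.surjUpToAssoc_atoms hT).biSup_eq (fun u hu => ?_) fun v w hvw => ?_
  · have hx : {mkCls u} ∈ ZpSet u := by
      rw [zpSet_eq_singleton_of_mAtom hu, Set.mem_singleton_iff]
    have h := hw.surjUpToAssoc_univ.biSup_eq (g := fun t => tpEl t {mkCls (φ u)})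
      (fun a _ => tpEl_map hT hw hi a hx) fun t t' htt' => by rw [tpEl_congr htt']
    simpa only [iSup_univ] using h
  · rw [mkCls_eq_mkCls_iff.2 hvw]

theorem isoatomic_weakTransfer_preserves_invariants_general :
    (∀ s s' : Multiset (AClass H), (∃ a : H, s ∈ ZpSet a) → (∃ b : H, s' ∈ ZpSet b) →
      (s ≤ s' ↔ s.map (mapCls φ) ≤ s'.map (mapCls φ))) ∧
    (∀ a b : H, dvdP a b ↔ dvdP (φ a) (φ b)) ∧
    ((∀ a : H, omegaH a ≤ omegaH (φ a)) ∧ (∀ a : H, omegaH' a ≤ omegaH' (φ a)) ∧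
      (AssocCongruence T →
        (∀ a : H, omegaH a = omegaH (φ a)) ∧ (∀ a : H, omegaH' a = omegaH' (φ a)) ∧
          omegaMon H = omegaMon T ∧ omegaMon' H = omegaMon' T)) ∧
    ((∀ (a : H) (x : Multiset (AClass H)), (∃ b : H, x ∈ ZpSet b) →
        tpEl a x = tpEl (φ a) (x.map (mapCls φ))) ∧
      tpMon H = tpMon T) := by
  have hdvd := dvdP_map_iff hT hw hi
  have hatoms := hw.surjUpToAssoc_atoms hT
  have huniv := hw.surjUpToAssoc_univ
  simp only [omegaMon, omegaMon', omegaH_eq_omegaOn, omegaH'_eq_omegaOn]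
  refine ⟨fun s s' ⟨_, hs⟩ ⟨_, hs'⟩ => (hi.map_mapCls_le_iff hs hs').symm, hdvd,
    ⟨omegaOn_le_omegaOn_map hdvd hatoms.mapsTo, omegaOn_le_omegaOn_map hdvd huniv.mapsTo,
      fun hcongr => ?_⟩,
    fun a x ⟨_, hx⟩ => tpEl_map hT hw hi a hx, tpMon_eq hT hw hi⟩
  have homega := hatoms.omegaOn_map_eq hdvd hcongr
  have homega' := huniv.omegaOn_map_eq hdvd hcongr
  exact ⟨homega, homega', hatoms.biSup_eq (fun u _ => homega u) fun _ _ => omegaOn_congr _,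
    hatoms.biSup_eq (fun u _ => homega' u) fun _ _ => omegaOn_congr _⟩

end Isoatomic

end Hom

/-- An isoatomic weak transfer homomorphism `φ : H → T` between atomic
cancellative monoids preserves divisibility up to permutation (on permutable
factorizations and on elements), the `ω_p`- and `ω_p'`-invariants (with equality when `T`
is commutative), and the permutable tame degrees. -/
theorem isoatomic_weakTransfer_preserves_invariants {H T : Type*}
    [CancelMonoid H] [CancelMonoid T] (hH : Atomic H) (hT : Atomic T)
    (φ : H →* T) (hw : IsWeakTransferHom φ) (hi : IsIsoatomic φ) :
    (∀ s s' : Multiset (AClass H), (∃ a : H, s ∈ ZpSet a) → (∃ b : H, s' ∈ ZpSet b) →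
      (s ≤ s' ↔ s.map (mapCls φ) ≤ s'.map (mapCls φ))) ∧
    (∀ a b : H, dvdP a b ↔ dvdP (φ a) (φ b)) ∧
    ((∀ a : H, omegaH a ≤ omegaH (φ a)) ∧ (∀ a : H, omegaH' a ≤ omegaH' (φ a)) ∧
      ((∀ x y : T, x * y = y * x) →
        (∀ a : H, omegaH a = omegaH (φ a)) ∧ (∀ a : H, omegaH' a = omegaH' (φ a)) ∧
          omegaMon H = omegaMon T ∧ omegaMon' H = omegaMon' T)) ∧
    ((∀ (a : H) (x : Multiset (AClass H)), (∃ b : H, x ∈ ZpSet b) →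
        tpEl a x = tpEl (φ a) (x.map (mapCls φ))) ∧
      tpMon H = tpMon T) := by
  obtain ⟨hle, hdvd, ⟨homega, homega', heq⟩, htame⟩ :=
    isoatomic_weakTransfer_preserves_invariants_general hT hw hi
  exact ⟨hle, hdvd, ⟨homega, homega', fun hcomm => heq (assocCongruence_of_comm hcomm)⟩, htame⟩
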